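/- Let R = F[u,v,w,x,y,z] over a field F and let I be the ideal generated by the three 2×2 minors vz-wy, wx-uz, uy-vx of the matrix [[u,v,w],[x,y,z]]. Then I is a prime ideal of R, and the quotient ring R/I has Krull dimension 4. -/

import Mathlib

open MvPolynomial

/-- Products of the entries depend only on the margins of the exponent matrix. -/
theorem swap_prod {A : Type*} [CommRing A] (u v w x y z : A)
    (h1 : v * z = w * y) (h2 : w * x = u * z) (h3 : u * y = v * x) (n : ℕ) :
    ∀ a b c d e f a' b' c' d' e' f' : ℕ, (a - a') + (b - b') + (c - c') = n →
      a + d = a' + d' → b + e = b' + e' → c + f = c' + f' → a + b + c = a' + b' + c' →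
      u ^ a * v ^ b * w ^ c * x ^ d * y ^ e * z ^ f =
      u ^ a' * v ^ b' * w ^ c' * x ^ d' * y ^ e' * z ^ f' := by
  induction n with
  | zero =>
    intro a b c d e f a' b' c' d' e' f' h q1 q2 q3 q4
    obtain rfl : a = a' := by omega
    obtain rfl : b = b' := by omega
    obtain rfl : c = c' := by omega
    obtain rfl : d = d' := by omega
    obtain rfl : e = e' := by omega
    obtain rfl : f = f' := by omega
    rfl
  | succ n ih =>
    intro a b c d e f a' b' c' d' e' f' h q1 q2 q3 q4
    have hc : (a' < a ∧ b < b') ∨ (a' < a ∧ c < c') ∨ (b' < b ∧ a < a') ∨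
      (b' < b ∧ c < c') ∨ (c' < c ∧ a < a') ∨ (c' < c ∧ b < b') := by omega
    rcases hc with ⟨p, q⟩ | ⟨p, q⟩ | ⟨p, q⟩ | ⟨p, q⟩ | ⟨p, q⟩ | ⟨p, q⟩
    · obtain ⟨k, rfl⟩ : ∃ k, a = k + 1 := ⟨a - 1, by omega⟩
      obtain ⟨l, rfl⟩ : ∃ l, e = l + 1 := ⟨e - 1, by omega⟩
      have := ih k (b + 1) c (d + 1) l f a' b' c' d' e' f' (by omega) (by omega) (by omega)
        (by omega) (by omega)
      linear_combination this + u ^ k * v ^ b * w ^ c * x ^ d * y ^ l * z ^ f * h3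
    · obtain ⟨k, rfl⟩ : ∃ k, a = k + 1 := ⟨a - 1, by omega⟩
      obtain ⟨l, rfl⟩ : ∃ l, f = l + 1 := ⟨f - 1, by omega⟩
      have := ih k b (c + 1) (d + 1) e l a' b' c' d' e' f' (by omega) (by omega) (by omega)
        (by omega) (by omega)
      linear_combination this - u ^ k * v ^ b * w ^ c * x ^ d * y ^ e * z ^ l * h2
    · obtain ⟨k, rfl⟩ : ∃ k, b = k + 1 := ⟨b - 1, by omega⟩
      obtain ⟨l, rfl⟩ : ∃ l, d = l + 1 := ⟨d - 1, by omega⟩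
      have := ih (a + 1) k c l (e + 1) f a' b' c' d' e' f' (by omega) (by omega) (by omega)
        (by omega) (by omega)
      linear_combination this - u ^ a * v ^ k * w ^ c * x ^ l * y ^ e * z ^ f * h3
    · obtain ⟨k, rfl⟩ : ∃ k, b = k + 1 := ⟨b - 1, by omega⟩
      obtain ⟨l, rfl⟩ : ∃ l, f = l + 1 := ⟨f - 1, by omega⟩
      have := ih a k (c + 1) d (e + 1) l a' b' c' d' e' f' (by omega) (by omega) (by omega)
        (by omega) (by omega)
      linear_combination this + u ^ a * v ^ k * w ^ c * x ^ d * y ^ e * z ^ l * h1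
    · obtain ⟨k, rfl⟩ : ∃ k, c = k + 1 := ⟨c - 1, by omega⟩
      obtain ⟨l, rfl⟩ : ∃ l, d = l + 1 := ⟨d - 1, by omega⟩
      have := ih (a + 1) b k l e (f + 1) a' b' c' d' e' f' (by omega) (by omega) (by omega)
        (by omega) (by omega)
      linear_combination this + u ^ a * v ^ b * w ^ k * x ^ l * y ^ e * z ^ f * h2
    · obtain ⟨k, rfl⟩ : ∃ k, c = k + 1 := ⟨c - 1, by omega⟩
      obtain ⟨l, rfl⟩ : ∃ l, e = l + 1 := ⟨e - 1, by omega⟩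
      have := ih a (b + 1) k d l (f + 1) a' b' c' d' e' f' (by omega) (by omega) (by omega)
        (by omega) (by omega)
      linear_combination this - u ^ a * v ^ b * w ^ k * x ^ d * y ^ l * z ^ f * h1

/-- The determinantal ideal. -/
noncomputable abbrev detI (F : Type*) [Field F] : Ideal (MvPolynomial (Fin 6) F) :=
  Ideal.span {X 1 * X 5 - X 2 * X 4, X 2 * X 3 - X 0 * X 5, X 0 * X 4 - X 1 * X 3}

/-- The rank-one parametrization. -/
noncomputable def par (F : Type*) [Field F] :
    MvPolynomial (Fin 6) F →ₐ[F] MvPolynomial (Fin 5) F :=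
  aeval ![X 0 * X 3, X 1 * X 3, X 2 * X 3, X 0 * X 4, X 1 * X 4, X 2 * X 4]

/-- The effect of the parametrization on exponents. -/
noncomputable def expo (e : Fin 6 →₀ ℕ) : Fin 5 →₀ ℕ :=
  Finsupp.equivFunOnFinite.symm
    ![e 0 + e 3, e 1 + e 4, e 2 + e 5, e 0 + e 1 + e 2, e 3 + e 4 + e 5]

theorem monomial_six {F : Type*} [Field F] (e : Fin 6 →₀ ℕ) :
    (monomial e (1 : F)) = X 0 ^ e 0 * X 1 ^ e 1 * X 2 ^ e 2 * X 3 ^ e 3 * X 4 ^ e 4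
      * X 5 ^ e 5 := by
  rw [monomial_eq, Finsupp.prod_fintype _ _ (by simp), Fin.prod_univ_six]
  simp

theorem par_monomial {F : Type*} [Field F] (e : Fin 6 →₀ ℕ) :
    par F (monomial e 1) = monomial (expo e) 1 := by
  rw [monomial_six, monomial_eq, Finsupp.prod_fintype _ _ (by simp), Fin.prod_univ_five]
  simp [par, expo]
  ring

theorem mk_monomial_eq {F : Type*} [Field F] (e e' : Fin 6 →₀ ℕ) (h : expo e = expo e') :
    Ideal.Quotient.mk (detI F) (monomial e 1) = Ideal.Quotient.mk (detI F) (monomial e' 1) := by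
  have h0 := DFunLike.congr_fun h 0
  have h1 := DFunLike.congr_fun h 1
  have h2 := DFunLike.congr_fun h 2
  have h3 := DFunLike.congr_fun h 3
  simp [expo] at h0 h1 h2 h3
  rw [monomial_six, monomial_six]
  simp only [map_mul, map_pow]
  refine swap_prod _ _ _ _ _ _ ?_ ?_ ?_ _ _ _ _ _ _ _ _ _ _ _ _ _ rfl h0 h1 h2 h3
  all_goals
    rw [← map_mul, ← map_mul, Ideal.Quotient.mk_eq_mk_iff_sub_mem]
    exact Ideal.subset_span (by simp)

theorem ker_par (F : Type*) [Field F] : RingHom.ker (par F) = detI F := by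
  apply le_antisymm
  · intro p hp
    rw [RingHom.mem_ker] at hp
    let σ : MvPolynomial (Fin 5) F →ₗ[F] (MvPolynomial (Fin 6) F ⧸ detI F) :=
      (basisMonomials (Fin 5) F).constr F
        (fun d => Ideal.Quotient.mk (detI F) (monomial (Function.invFun expo d) 1))
    have hσ : σ ∘ₗ (par F).toLinearMap = (Ideal.Quotient.mkₐ F (detI F)).toLinearMap := by
      apply (basisMonomials (Fin 6) F).ext
      intro e
      have h1 : σ (monomial (expo e) 1) = Ideal.Quotient.mk (detI F)
          (monomial (Function.invFun expo (expo e)) 1) := by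
        have := (basisMonomials (Fin 5) F).constr_basis F
          (fun d => Ideal.Quotient.mk (detI F) (monomial (Function.invFun expo d) 1)) (expo e)
        simpa using this
      simp only [coe_basisMonomials, LinearMap.comp_apply, AlgHom.toLinearMap_apply,
        par_monomial, h1]
      exact mk_monomial_eq _ _ (Function.invFun_eq ⟨e, rfl⟩)
    have := LinearMap.congr_fun hσ p
    simp only [LinearMap.comp_apply, AlgHom.toLinearMap_apply, hp, map_zero] at this
    exact Ideal.Quotient.eq_zero_iff_mem.mp this.symm
  · rw [Ideal.span_le]
    rintro p (rfl | rfl | rfl) <;> simp [par, RingHom.mem_ker] <;> ring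

/-- Parametrization of the hypersurface `uy = vx`. -/
noncomputable def par1 (F : Type*) [Field F] :
    MvPolynomial (Fin 6) F →ₐ[F] MvPolynomial (Fin 6) F :=
  aeval ![X 0 * X 2, X 1 * X 2, X 4, X 0 * X 3, X 1 * X 3, X 5]

theorem ker_par1_le (F : Type*) [Field F] : RingHom.ker (par1 F) ≤ detI F := by
  rw [← ker_par]
  have : par F = (aeval ![X 0, X 1, X 3, X 4, X 2 * X 3, X 2 * X 4] :
      MvPolynomial (Fin 6) F →ₐ[F] MvPolynomial (Fin 5) F).comp (par1 F) := by
    apply MvPolynomial.algHom_ext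
    intro i
    fin_cases i <;> simp [par, par1]
  intro p hp
  rw [RingHom.mem_ker] at hp ⊢
  rw [this, AlgHom.comp_apply, hp, map_zero]

theorem determinantal_ideal_prime_dim_four (F : Type*) [Field F] :
    (Ideal.span {X 1 * X 5 - X 2 * X 4, X 2 * X 3 - X 0 * X 5,
        X 0 * X 4 - X 1 * X 3} : Ideal (MvPolynomial (Fin 6) F)).IsPrime ∧
    ringKrullDim (MvPolynomial (Fin 6) F ⧸
        (Ideal.span {X 1 * X 5 - X 2 * X 4, X 2 * X 3 - X 0 * X 5,
          X 0 * X 4 - X 1 * X 3} : Ideal (MvPolynomial (Fin 6) F))) = 4 := by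
  have hp : (detI F).IsPrime := by
    rw [← ker_par]; exact RingHom.ker_isPrime _
  refine ⟨hp, ?_⟩
  change ringKrullDim (MvPolynomial (Fin 6) F ⧸ detI F) = 4
  have hp1 : (RingHom.ker (par1 F)).IsPrime := RingHom.ker_isPrime _
  have d6 : ringKrullDim (MvPolynomial (Fin 6) F) = 6 := by
    rw [MvPolynomial.ringKrullDim_of_isNoetherianRing]; simp
  have d3 : ringKrullDim (MvPolynomial (Fin 3) F) = 3 := by
    rw [MvPolynomial.ringKrullDim_of_isNoetherianRing]; simp
  have s1 := ringKrullDim_succ_le_of_surjective (Ideal.Quotient.mk (RingHom.ker (par1 F)))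
    Ideal.Quotient.mk_surjective (r := X 0 * X 4 - X 1 * X 3)
    (mem_nonZeroDivisors_of_ne_zero (by
      intro h
      have := congrArg (eval ![1, 0, 0, 0, 1, 0]) h
      simp at this))
    (by rw [Ideal.Quotient.eq_zero_iff_mem, RingHom.mem_ker]; simp [par1]; ring)
  have s2 := ringKrullDim_succ_le_of_surjective (Ideal.Quotient.factor (ker_par1_le F))
    (Ideal.Quotient.factor_surjective _)
    (r := Ideal.Quotient.mk _ (X 1 * X 5 - X 2 * X 4))
    (mem_nonZeroDivisors_of_ne_zero (by
      intro h
      rw [Ideal.Quotient.eq_zero_iff_mem, RingHom.mem_ker] at h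
      have := congrArg (eval ![0, 1, 1, 0, 0, 1]) h
      simp [par1] at this))
    (by rw [Ideal.Quotient.factor_mk, Ideal.Quotient.eq_zero_iff_mem]
        exact Ideal.subset_span (by simp))
  let g : MvPolynomial (Fin 6) F →ₐ[F] MvPolynomial (Fin 3) F :=
    aeval ![X 0, X 1, X 2, 0, 0, 0]
  have hg : ∀ a ∈ detI F, g.toRingHom a = 0 := by
    intro a ha
    have : detI F ≤ RingHom.ker g := by
      rw [Ideal.span_le]
      rintro p (rfl | rfl | rfl) <;> simp [g, RingHom.mem_ker]
    exact this ha
  have gs : Function.Surjective g := by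
    intro p
    refine ⟨aeval ![X 0, X 1, X 2] p, ?_⟩
    have : g.comp (aeval ![X 0, X 1, X 2]) = AlgHom.id F _ := by
      apply MvPolynomial.algHom_ext
      intro i
      fin_cases i <;> simp [g]
    exact DFunLike.congr_fun this p
  have s3 := ringKrullDim_succ_le_of_surjective (Ideal.Quotient.lift (detI F) g.toRingHom hg)
    (Ideal.Quotient.lift_surjective_of_surjective _ _ gs)
    (r := Ideal.Quotient.mk _ (X 3))
    (mem_nonZeroDivisors_of_ne_zero (by
      intro h
      rw [Ideal.Quotient.eq_zero_iff_mem, ← ker_par, RingHom.mem_ker] at h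
      have := congrArg (eval ![1, 1, 1, 1, 1]) h
      simp [par] at this))
    (by simp [g])
  rw [d3] at s3
  rw [d6] at s1
  have s4 : ringKrullDim (MvPolynomial (Fin 6) F ⧸ detI F) + 1 + 1 ≤ 6 :=
    (add_le_add_left s2 1).trans s1
  generalize ringKrullDim (MvPolynomial (Fin 6) F ⧸ detI F) = d at s3 s4
  clear s1 s2
  induction d using WithBot.recBotCoe with
  | bot => exact absurd s3 (by decide)
  | coe d =>
    induction d using ENat.recTopCoe with
    | top => exact absurd s4 (by decide)
    | coe n =>
      have h1 : 3 + 1 ≤ n := by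
        have : ((3 + 1 : ℕ) : ℕ∞) ≤ (n : ℕ∞) := WithBot.coe_le_coe.mp s3
        exact Nat.cast_le.mp this
      have h2 : n + 1 + 1 ≤ 6 := by
        have : ((n + 1 + 1 : ℕ) : ℕ∞) ≤ ((6 : ℕ) : ℕ∞) := WithBot.coe_le_coe.mp s4
        exact Nat.cast_le.mp this
      obtain rfl : n = 4 := by omega
      rfl
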